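/- For every t > 0 and every ℓ₀ with 0 < ℓ₀ ≤ t, one has μ^ℓ_t([ℓ₀, t]) = t·ℓ₀^{−γ}/γ + ((2−γ)/((γ−1)γ))·ℓ₀^{1−γ}; moreover μ^ℓ_t((t,∞)) = 0. -/

import Mathlib

open MeasureTheory Filter Set
open scoped ENNReal NNReal Topology

noncomputable section

/-- `ℓ_t(s,u)`: the length of the interval `[s,s+u] ∩ [0,t]`. -/
def ellK (t s u : ℝ) : ℝ := max 0 (min (s + u) t - max s 0)

/-- The intensity measure `u^{-γ-1} du` on `(0,∞)`. -/
def muU (γ : ℝ) : Measure ℝ :=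
  (volume.restrict (Set.Ioi 0)).withDensity fun u => ENNReal.ofReal (u ^ (-γ - 1))

/-- The measure `μ^ℓ_t` on `(0,∞)`:
`μ^ℓ_t(A) = ∫_ℝ ∫_0^∞ 1{ℓ_t(s,u) ∈ A} u^{-γ-1} du ds`. -/
def muEll (γ t : ℝ) : Measure ℝ :=
  (Measure.map (fun p : ℝ × ℝ => ellK t p.1 p.2)
    ((volume : Measure ℝ).prod (muU γ))).restrict (Set.Ioi 0)

/-- The measure `μ^{ℓ,r}_t` on `(0,∞)`:
`μ^{ℓ,r}_t(A) = ∫_{(0,∞)} ∫_{(0,∞)} 1{rℓ ∈ A} μ^ℓ_t(dℓ) F_R(dr)`. -/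
def muEllR (γ t : ℝ) (FR : Measure ℝ) : Measure ℝ :=
  (Measure.map (fun p : ℝ × ℝ => p.1 * p.2) (FR.prod (muEll γ t))).restrict (Set.Ioi 0)

/-- The measure `ν` on `[0,1]`: density `s^{-(γ+1)} + ((2-γ)/γ)·s^{-γ}` on `(0,1)` with
respect to Lebesgue measure, together with an atom of mass `1/(γ(γ-1))` at the point `1`. -/
def nuM (γ : ℝ) : Measure ℝ :=
  (volume.restrict (Set.Ioo 0 1)).withDensity
      (fun s => ENNReal.ofReal (s ^ (-(γ + 1)) + (2 - γ) / γ * s ^ (-γ)))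
    + (Real.toNNReal (1 / (γ * (γ - 1)))) • Measure.dirac 1

instance nuM.sigmaFinite (γ : ℝ) : SigmaFinite (nuM γ) := by
  unfold nuM; infer_instance

end

/-!
For `0 < l ≤ t`, the interval `[s, s + u]` meets `[0, t]` in length at least `l` exactly when
`l ≤ u` and `s ∈ [l - u, t - l]`, an interval of length `t - 2 * l + u`. By Tonelli, the mass of
`[l, ∞)` under `μ^ℓ_t` is therefore the integral of `t - 2 * l + u` against `u ^ (-γ - 1) du` over
`u ≥ l`. Since the overlap never exceeds `t`, this is also the mass of `[l, t]`.
-/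

section Overlap

variable {t l : ℝ}

theorem measurable_ellK (t : ℝ) : Measurable fun p : ℝ × ℝ => ellK t p.1 p.2 := by
  unfold ellK
  fun_prop

theorem ellK_le_max (t s u : ℝ) : ellK t s u ≤ max 0 t :=
  max_le_max_left 0 <| by linarith [min_le_right (s + u) t, le_max_right s 0]

theorem le_ellK_iff (hl : 0 < l) (hlt : l ≤ t) (s u : ℝ) :
    l ≤ ellK t s u ↔ l ≤ u ∧ s ∈ Icc (l - u) (t - l) := by
  have overlap_iff : l ≤ ellK t s u ↔ (l + s ≤ s + u ∧ l ≤ s + u) ∧ l + s ≤ t ∧ l ≤ t := by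
    rw [ellK, le_max_iff, or_iff_right hl.not_ge, le_sub_iff_add_le, le_min_iff,
      ← max_add_add_left, max_le_iff, max_le_iff, add_zero]
  rw [overlap_iff, mem_Icc]
  constructor
  · rintro ⟨⟨hu, hright⟩, hleft, -⟩
    exact ⟨by linarith, by linarith, by linarith⟩
  · rintro ⟨hu, hright, hleft⟩
    exact ⟨⟨by linarith, by linarith⟩, by linarith, hlt⟩

theorem volume_setOf_le_ellK (hl : 0 < l) (hlt : l ≤ t) (u : ℝ) :
    volume {s | l ≤ ellK t s u} =
      (Ici l).indicator (fun u => ENNReal.ofReal (t - 2 * l + u)) u := by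
  by_cases hu : l ≤ u
  · rw [indicator_of_mem (mem_Ici.2 hu)]
    simp only [le_ellK_iff hl hlt, hu, true_and, ofPred_mem_eq, Real.volume_Icc]
    congr 1
    ring
  · simp [le_ellK_iff hl hlt, hu]

theorem volume_prod_setOf_le_ellK (μ : Measure ℝ) [SFinite μ] (hl : 0 < l) (hlt : l ≤ t) :
    (volume.prod μ) {p | l ≤ ellK t p.1 p.2} =
      ∫⁻ u in Ici l, ENNReal.ofReal (t - 2 * l + u) ∂μ := by
  rw [Measure.prod_apply_symm (measurableSet_le measurable_const (measurable_ellK t)),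
    ← lintegral_indicator measurableSet_Ici]
  exact lintegral_congr (volume_setOf_le_ellK hl hlt)

end Overlap

section PowerIntegrals

variable {a c : ℝ}

theorem rpow_mul_add_eq {u : ℝ} (hu : 0 < u) (a b : ℝ) :
    u ^ a * (b + u) = b * u ^ a + u ^ (a + 1) := by
  rw [Real.rpow_add_one hu.ne']
  ring

theorem integrableOn_Ioi_rpow_mul_add (ha : a < -2) (hc : 0 < c) (b : ℝ) :
    IntegrableOn (fun u : ℝ => u ^ a * (b + u)) (Ioi c) := by
  refine IntegrableOn.congr_fun ?_ (fun u hu => (rpow_mul_add_eq (hc.trans hu) a b).symm)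
    measurableSet_Ioi
  exact ((integrableOn_Ioi_rpow_of_lt (by linarith) hc).const_mul b).add
    (integrableOn_Ioi_rpow_of_lt (by linarith) hc)

theorem integral_Ioi_rpow_mul_add (ha : a < -2) (hc : 0 < c) (b : ℝ) :
    ∫ u in Ioi c, u ^ a * (b + u) = -(b * c ^ (a + 1) / (a + 1) + c ^ (a + 2) / (a + 2)) := by
  have ha₁ : a < -1 := by linarith
  have ha₂ : a + 1 < -1 := by linarith
  calc
    ∫ u in Ioi c, u ^ a * (b + u) = ∫ u in Ioi c, (b * u ^ a + u ^ (a + 1)) :=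
      setIntegral_congr_fun measurableSet_Ioi fun u hu => rpow_mul_add_eq (hc.trans hu) a b
    _ = b * (-c ^ (a + 1) / (a + 1)) + -c ^ (a + 1 + 1) / (a + 1 + 1) := by
      rw [integral_add ((integrableOn_Ioi_rpow_of_lt ha₁ hc).const_mul b)
        (integrableOn_Ioi_rpow_of_lt ha₂ hc), integral_const_mul,
        integral_Ioi_rpow_of_lt ha₁ hc, integral_Ioi_rpow_of_lt ha₂ hc]
    _ = -(b * c ^ (a + 1) / (a + 1) + c ^ (a + 2) / (a + 2)) := by
      rw [show a + 1 + 1 = a + 2 by ring]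
      ring

end PowerIntegrals

section IntensityMeasure

variable {γ l : ℝ}

instance muU.sigmaFinite (γ : ℝ) : SigmaFinite (muU γ) := by
  unfold muU
  infer_instance

theorem setLIntegral_muU (γ : ℝ) {s : Set ℝ} (hs : MeasurableSet s) (hs₀ : s ⊆ Ioi 0)
    (f : ℝ → ℝ≥0∞) :
    ∫⁻ u in s, f u ∂muU γ = ∫⁻ u in s, ENNReal.ofReal (u ^ (-γ - 1)) * f u := by
  rw [muU, setLIntegral_withDensity_eq_setLIntegral_mul_non_measurable _ (by fun_prop) f hs
    (ae_of_all _ fun _ => ENNReal.ofReal_lt_top), Measure.restrict_restrict_of_subset hs₀]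
  rfl

theorem setLIntegral_Ici_ofReal_add_muU (hγ : 1 < γ) (hl : 0 < l) {b : ℝ} (hb : 0 ≤ b + l) :
    ∫⁻ u in Ici l, ENNReal.ofReal (b + u) ∂muU γ =
      ENNReal.ofReal (b * l ^ (-γ) / γ + l ^ (1 - γ) / (γ - 1)) := by
  have hexp : -γ - 1 < -2 := by linarith
  have integrand_nonneg : ∀ u ∈ Ioi l, 0 ≤ u ^ (-γ - 1) * (b + u) := fun u hu =>
    mul_nonneg (Real.rpow_nonneg (hl.trans hu).le _) (by linarith [mem_Ioi.1 hu])
  calc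
    ∫⁻ u in Ici l, ENNReal.ofReal (b + u) ∂muU γ
        = ∫⁻ u in Ioi l, ENNReal.ofReal (u ^ (-γ - 1)) * ENNReal.ofReal (b + u) := by
      rw [setLIntegral_muU γ measurableSet_Ici (Ici_subset_Ioi.2 hl),
        restrict_Ioi_eq_restrict_Ici]
    _ = ∫⁻ u in Ioi l, ENNReal.ofReal (u ^ (-γ - 1) * (b + u)) :=
      setLIntegral_congr_fun measurableSet_Ioi fun u hu =>
        (ENNReal.ofReal_mul (Real.rpow_nonneg (hl.trans hu).le _)).symm
    _ = ENNReal.ofReal (∫ u in Ioi l, u ^ (-γ - 1) * (b + u)) :=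
      (ofReal_integral_eq_lintegral_ofReal (integrableOn_Ioi_rpow_mul_add hexp hl b)
        (ae_restrict_of_forall_mem measurableSet_Ioi integrand_nonneg)).symm
    _ = ENNReal.ofReal (b * l ^ (-γ) / γ + l ^ (1 - γ) / (γ - 1)) := by
      rw [integral_Ioi_rpow_mul_add hexp hl, show -γ - 1 + 1 = -γ by ring,
        show -γ - 1 + 2 = 1 - γ by ring, ← neg_sub γ 1, div_neg, div_neg, neg_add, neg_neg, neg_neg]

end IntensityMeasure

section OverlapMeasure

variable {t l : ℝ}

theorem muEll_Ioi_self (γ t : ℝ) : muEll γ t (Ioi t) = 0 := by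
  have unattained : (fun p : ℝ × ℝ => ellK t p.1 p.2) ⁻¹' (Ioi t ∩ Ioi 0) = ∅ :=
    eq_empty_of_forall_notMem fun p ⟨ht, h0⟩ => (ellK_le_max t p.1 p.2).not_gt (max_lt h0 ht)
  rw [muEll, Measure.restrict_apply measurableSet_Ioi, Measure.map_apply (measurable_ellK t)
    (measurableSet_Ioi.inter measurableSet_Ioi), unattained, measure_empty]

theorem muEll_Icc_eq_muEll_Ici (γ t l : ℝ) : muEll γ t (Icc l t) = muEll γ t (Ici l) := by
  rw [← Ici_sdiff_Ioi, measure_sdiff_null (muEll_Ioi_self γ t)]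

theorem muEll_Ici (γ : ℝ) (hl : 0 < l) (hlt : l ≤ t) :
    muEll γ t (Ici l) = ∫⁻ u in Ici l, ENNReal.ofReal (t - 2 * l + u) ∂muU γ := by
  rw [muEll, Measure.restrict_eq_self _ (Ici_subset_Ioi.2 hl),
    Measure.map_apply (measurable_ellK t) measurableSet_Ici]
  exact volume_prod_setOf_le_ellK (muU γ) hl hlt

end OverlapMeasure

theorem stmt_7_general {γ t l : ℝ} (hγ : 1 < γ) (hl : 0 < l) (hlt : l ≤ t) :
    muEll γ t (Icc l t)
        = ENNReal.ofReal (t * l ^ (-γ) / γ + (2 - γ) / ((γ - 1) * γ) * l ^ (1 - γ))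
      ∧ muEll γ t (Ioi t) = 0 := by
  refine ⟨?_, muEll_Ioi_self γ t⟩
  rw [muEll_Icc_eq_muEll_Ici, muEll_Ici γ hl hlt,
    setLIntegral_Ici_ofReal_add_muU hγ hl (by linarith)]
  congr 1
  have hγ₀ : γ ≠ 0 := by linarith
  have hγ₁ : γ - 1 ≠ 0 := by linarith
  have hpow : l ^ (1 - γ) = l * l ^ (-γ) := by
    rw [sub_eq_neg_add, Real.rpow_add_one hl.ne', mul_comm]
  rw [hpow]
  field_simp
  ring

/-- For `0 < ℓ₀ ≤ t`:
`μ^ℓ_t([ℓ₀,t]) = t·ℓ₀^{-γ}/γ + ((2-γ)/((γ-1)γ))·ℓ₀^{1-γ}`, and `μ^ℓ_t((t,∞)) = 0`. -/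
theorem stmt_7 (γ : ℝ) (hγ1 : 1 < γ) (hγ2 : γ < 2)
    (t : ℝ) (ht : 0 < t) (ℓ0 : ℝ) (hℓ0 : 0 < ℓ0) (hℓ0t : ℓ0 ≤ t) :
    muEll γ t (Set.Icc ℓ0 t)
        = ENNReal.ofReal (t * ℓ0 ^ (-γ) / γ + (2 - γ) / ((γ - 1) * γ) * ℓ0 ^ (1 - γ))
      ∧ muEll γ t (Set.Ioi t) = 0 :=
  stmt_7_general hγ1 hℓ0 hℓ0t
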